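/- arXiv:2203.15131 — 3 statements merged into one kernel-verified Lean document; each statement's English description precedes it below -/
import Mathlib

section
/- Let 0 < θ < 1, C > 0, let L ≥ 1 be an integer, and let (t_m)_{m≥1} be a sequence of nonnegative real numbers such that t_m ≤ C θ^m for every m > L. Define B_0 = 1 and, for 1 ≤ k ≤ L, B_k = ∑_{1 ≤ m_1 < ... < m_k ≤ L} t_{m_1} ··· t_{m_k}. Then for every n ≥ 1, the sum over all strictly increasing n-tuples of positive integers of the products of the t's satisfies ∑_{1 ≤ m_1 < ... < m_n} t_{m_1} ··· t_{m_n} ≤ c ∑_{k=0}^{min(n,L)} B_k (θ^L C)^{n-k}, where c = ∏_{j=1}^∞ (1-θ^j)^{-1}. In particular, for n > L one has ∑_{1 ≤ m_1 < ... < m_n} t_{m_1} ··· t_{m_n} ≤ ξ (θ^L C)^n where ξ = c ∑_{k=0}^{L} B_k (θ^L C)^{-k}. -/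
/-!
Split `{1, …, L + d}` at `L`: an elementary symmetric polynomial of a union is the convolution of
those of the two parts. The tail `t_{L+1}, t_{L+2}, …` is dominated by `θ^L C` times
`θ, θ^2, …`, so by monotonicity and homogeneity it remains to bound `e_j(θ, …, θ^d)` by
`∏_{i ≤ j} (1 - θ^i)⁻¹`. For this, separating off `θ` from `θ, …, θ^{d+1}` rescales the other
variables by `θ`, which gives Euler's recursion
`e_{j+1}(θ, …, θ^{d+1}) = θ^{j+1} (e_{j+1}(θ, …, θ^d) + e_j(θ, …, θ^d))`.
Since `e_{j+1}` grows with `d`, this bounds `(1 - θ^{j+1}) e_{j+1}` by `θ^{j+1} e_j`.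
-/

section Esymm

variable {R : Type*} [CommSemiring R]

theorem esymm_zero_right (s : Multiset R) : s.esymm 0 = 1 := by
  simp [Multiset.esymm]

theorem esymm_eq_zero_of_card_lt {s : Multiset R} {n : ℕ} (h : s.card < n) : s.esymm n = 0 := by
  simp [Multiset.esymm, Multiset.powersetCard_eq_empty n h]

theorem esymm_cons_succ (a : R) (s : Multiset R) (n : ℕ) :
    (a ::ₘ s).esymm (n + 1) = s.esymm (n + 1) + a * s.esymm n := by
  simp [Multiset.esymm, Multiset.powersetCard_cons, Multiset.sum_map_mul_left]

open Polynomial in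
theorem coeff_prod_one_add_C_mul_X (s : Multiset R) (n : ℕ) :
    (s.map fun r => 1 + C r * X).prod.coeff n = s.esymm n := by
  induction s using Multiset.induction_on generalizing n with
  | empty =>
    cases n with
    | zero => simp [esymm_zero_right]
    | succ n => rw [esymm_eq_zero_of_card_lt] <;> simp [coeff_one]
  | cons a s ih =>
    cases n with
    | zero => simp [add_mul, mul_assoc, ih, esymm_zero_right]
    | succ n => simp [add_mul, mul_assoc, ih, esymm_cons_succ]

theorem esymm_add (s u : Multiset R) (n : ℕ) :
    (s + u).esymm n = ∑ k ∈ Finset.range (n + 1), s.esymm k * u.esymm (n - k) := by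
  simp only [← coeff_prod_one_add_C_mul_X, Multiset.map_add, Multiset.prod_add,
    Polynomial.coeff_mul, Finset.Nat.sum_antidiagonal_eq_sum_range_succ_mk]

theorem esymm_map_mul_left {ι : Type*} (a : R) (f : ι → R) (s : Multiset ι) (n : ℕ) :
    (s.map fun i => a * f i).esymm n = a ^ n * (s.map f).esymm n := by
  simpa [Function.comp_def] using (Multiset.pow_smul_esymm a n (s.map f)).symm

end Esymm

section EsymmOrdered

variable {R : Type*} [CommSemiring R] [PartialOrder R] [IsOrderedRing R]

theorem esymm_nonneg {s : Multiset R} (hs : ∀ a ∈ s, 0 ≤ a) (n : ℕ) : 0 ≤ s.esymm n := by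
  refine Multiset.sum_nonneg fun x hx => ?_
  obtain ⟨v, hv, rfl⟩ := Multiset.mem_map.1 hx
  exact Multiset.prod_nonneg fun a ha =>
    hs a (Multiset.mem_of_le (Multiset.mem_powersetCard.1 hv).1 ha)

theorem esymm_map_le_esymm_map {ι : Type*} {s : Multiset ι} {f g : ι → R}
    (hf : ∀ i ∈ s, 0 ≤ f i) (hfg : ∀ i ∈ s, f i ≤ g i) (n : ℕ) :
    (s.map f).esymm n ≤ (s.map g).esymm n := by
  simp only [Multiset.esymm, Multiset.powersetCard_map, Multiset.map_map, Function.comp_apply]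
  refine Multiset.sum_map_le_sum_map _ _ fun v hv => ?_
  have hvs : ∀ i ∈ v, i ∈ s := fun i => Multiset.mem_of_le (Multiset.mem_powersetCard.1 hv).1
  exact Multiset.prod_map_le_prod_map₀ f g (fun i hi => hf i (hvs i hi))
    fun i hi => hfg i (hvs i hi)

end EsymmOrdered

theorem esymm_range_pow_succ_recursion {R : Type*} [CommSemiring R] (q : R) (d j : ℕ) :
    ((Multiset.range (d + 1)).map fun i => q ^ (i + 1)).esymm (j + 1) =
      q ^ (j + 1) * (((Multiset.range d).map fun i => q ^ (i + 1)).esymm (j + 1) +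
        ((Multiset.range d).map fun i => q ^ (i + 1)).esymm j) := by
  have hshift : ((Multiset.range (d + 1)).map fun i => q ^ (i + 1)) =
      q ::ₘ (Multiset.range d).map fun i => q * q ^ (i + 1) := by
    rw [add_comm d 1, Multiset.range_add]
    simp [pow_add, mul_assoc]
  rw [hshift, esymm_cons_succ, esymm_map_mul_left, esymm_map_mul_left]
  ring

theorem esymm_range_pow_succ_le_prod {K : Type*} [Field K] [LinearOrder K] [IsStrictOrderedRing K]
    {q : K} (hq0 : 0 ≤ q) (hq1 : q < 1) (d j : ℕ) :
    ((Multiset.range d).map fun i => q ^ (i + 1)).esymm j ≤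
      ∏ i ∈ Finset.range j, (1 - q ^ (i + 1))⁻¹ := by
  set E : ℕ → ℕ → K := fun d j => ((Multiset.range d).map fun i => q ^ (i + 1)).esymm j
  have hE (d j : ℕ) : 0 ≤ E d j :=
    esymm_nonneg (Multiset.forall_mem_map_iff.2 fun i _ => pow_nonneg hq0 (i + 1)) j
  induction j generalizing d with
  | zero => simp [esymm_zero_right]
  | succ j ih =>
    have hfactor : 0 < 1 - q ^ (j + 1) := sub_pos.2 (pow_lt_one₀ hq0 hq1 j.succ_ne_zero)
    have hmono : E d (j + 1) ≤ E (d + 1) (j + 1) := by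
      simp only [E, Multiset.range_succ, Multiset.map_cons, esymm_cons_succ]
      exact le_add_of_nonneg_right (mul_nonneg (by positivity) (hE d j))
    have hrec : E (d + 1) (j + 1) = q ^ (j + 1) * (E d (j + 1) + E d j) :=
      esymm_range_pow_succ_recursion q d j
    rw [Finset.prod_range_succ, ← div_eq_mul_inv, le_div_iff₀ hfactor]
    calc E d (j + 1) * (1 - q ^ (j + 1))
        ≤ q ^ (j + 1) * E d j := by
          linear_combination hmono + hrec
      _ ≤ E d j := mul_le_of_le_one_left (hE d j) (pow_le_one₀ hq0 hq1.le)
      _ ≤ ∏ i ∈ Finset.range j, (1 - q ^ (i + 1))⁻¹ := ih d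

theorem multipliable_inv_one_sub_pow_succ {𝕜 : Type*} [NormedField 𝕜] [CompleteSpace 𝕜] {q : 𝕜}
    (hq : ‖q‖ < 1) : Multipliable fun i : ℕ => (1 - q ^ (i + 1))⁻¹ := by
  have hsum : Summable fun i : ℕ => ‖-q ^ (i + 1)‖ := by
    simpa only [norm_neg, norm_pow] using
      (summable_nat_add_iff 1).2 (summable_geometric_of_lt_one (norm_nonneg q) hq)
  have hne (i : ℕ) : 1 + -q ^ (i + 1) ≠ 0 := by
    rw [← sub_eq_add_neg, sub_ne_zero]
    intro h
    have hlt : ‖q ^ (i + 1)‖ < 1 :=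
      (norm_pow q _).trans_lt (pow_lt_one₀ (norm_nonneg q) hq i.succ_ne_zero)
    exact hlt.ne (by rw [← h, norm_one])
  simpa only [sub_eq_add_neg] using
    (multipliable_one_add_of_summable hsum).inv₀ (tprod_one_add_ne_zero_of_summable hne hsum)

theorem prod_range_le_tprod_of_one_le {f : ℕ → ℝ} (hf : Multipliable f) (hf1 : ∀ i, 1 ≤ f i)
    (n : ℕ) : ∏ i ∈ Finset.range n, f i ≤ ∏' i, f i := by
  refine Monotone.ge_of_tendsto (monotone_nat_of_le_succ fun k => ?_) hf.hasProd.tendsto_prod_nat n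
  rw [Finset.prod_range_succ]
  exact le_mul_of_one_le_right (Finset.prod_nonneg fun i _ => zero_le_one.trans (hf1 i)) (hf1 k)

theorem esymm_range_pow_succ_le_tprod {q : ℝ} (hq0 : 0 ≤ q) (hq1 : q < 1) (d j : ℕ) :
    ((Multiset.range d).map fun i => q ^ (i + 1)).esymm j ≤ ∏' i : ℕ, (1 - q ^ (i + 1))⁻¹ := by
  have hone_le (i : ℕ) : 1 ≤ (1 - q ^ (i + 1))⁻¹ :=
    (one_le_inv₀ (sub_pos.2 (pow_lt_one₀ hq0 hq1 i.succ_ne_zero))).2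
      (sub_le_self 1 (pow_nonneg hq0 _))
  have hnorm : ‖q‖ < 1 := by rwa [Real.norm_of_nonneg hq0]
  exact (esymm_range_pow_succ_le_prod hq0 hq1 d j).trans
    (prod_range_le_tprod_of_one_le (multipliable_inv_one_sub_pow_succ hnorm) hone_le j)

theorem esymm_range_add_le {q D : ℝ} (hq0 : 0 ≤ q) (hq1 : q < 1) (hD : 0 ≤ D) {t : ℕ → ℝ}
    (ht0 : ∀ i, 0 ≤ t i) {L : ℕ} (ht : ∀ i, t (L + i) ≤ D * q ^ (i + 1)) (d n : ℕ) :
    ((Multiset.range (L + d)).map t).esymm n ≤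
      (∏' i : ℕ, (1 - q ^ (i + 1))⁻¹) * ∑ k ∈ Finset.range (min n L + 1),
        ((Multiset.range L).map t).esymm k * D ^ (n - k) := by
  set c := ∏' i : ℕ, (1 - q ^ (i + 1))⁻¹
  have htail (j : ℕ) : ((Multiset.range d).map fun i => t (L + i)).esymm j ≤ D ^ j * c :=
    calc ((Multiset.range d).map fun i => t (L + i)).esymm j
        ≤ ((Multiset.range d).map fun i => D * q ^ (i + 1)).esymm j :=
          esymm_map_le_esymm_map (fun i _ => ht0 _) (fun i _ => ht i) j
      _ = D ^ j * ((Multiset.range d).map fun i => q ^ (i + 1)).esymm j :=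
          esymm_map_mul_left D _ _ j
      _ ≤ D ^ j * c :=
          mul_le_mul_of_nonneg_left (esymm_range_pow_succ_le_tprod hq0 hq1 d j) (pow_nonneg hD j)
  have hsplit : (Multiset.range (L + d)).map t =
      (Multiset.range L).map t + (Multiset.range d).map fun i => t (L + i) := by
    simp [Multiset.range_add]
  have htrunc : Finset.range (min n L + 1) ⊆ Finset.range (n + 1) :=
    Finset.range_subset_range.2 (by lia)
  rw [hsplit, esymm_add, ← Finset.sum_subset htrunc, Finset.mul_sum]
  · refine Finset.sum_le_sum fun k _ => ?_
    have hhead : 0 ≤ ((Multiset.range L).map t).esymm k := esymm_nonneg (by simp [ht0]) k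
    linear_combination ((Multiset.range L).map t).esymm k * htail (n - k)
  · intro k hkn hkL
    rw [Finset.mem_range] at hkn hkL
    rw [esymm_eq_zero_of_card_lt (by rw [Multiset.card_map, Multiset.card_range]; lia), zero_mul]

theorem sum_powersetCard_Icc_one {R : Type*} [CommSemiring R] (t : ℕ → R) (N n : ℕ) :
    ∑ A ∈ (Finset.Icc 1 N).powersetCard n, ∏ a ∈ A, t a =
      ((Multiset.range N).map fun i => t (i + 1)).esymm n := by
  have hIcc : Finset.Icc 1 N = (Finset.range N).map (addRightEmbedding 1) := by
    rw [Finset.range_eq_Ico, Finset.map_add_right_Ico]; rfl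
  rw [← Finset.esymm_map_val, hIcc, Finset.map_val, Multiset.map_map]
  rfl

theorem sum_powersetCard_Icc_one_le {θ C : ℝ} (hθ0 : 0 ≤ θ) (hθ1 : θ < 1) (hC : 0 ≤ C)
    {t : ℕ → ℝ} (ht0 : ∀ m, 0 ≤ t m) {L : ℕ} (ht : ∀ m, L < m → t m ≤ C * θ ^ m) {N : ℕ}
    (hLN : L ≤ N) (n : ℕ) :
    ∑ A ∈ (Finset.Icc 1 N).powersetCard n, ∏ i ∈ A, t i ≤
      (∏' j : ℕ, (1 - θ ^ (j + 1))⁻¹) * ∑ k ∈ Finset.range (min n L + 1),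
        (∑ A ∈ (Finset.Icc 1 L).powersetCard k, ∏ i ∈ A, t i) * (θ ^ L * C) ^ (n - k) := by
  obtain ⟨d, rfl⟩ := Nat.exists_eq_add_of_le hLN
  have htail (i : ℕ) : t (L + i + 1) ≤ θ ^ L * C * θ ^ (i + 1) :=
    (ht _ (by lia)).trans_eq (by ring)
  simpa only [sum_powersetCard_Icc_one] using
    esymm_range_add_le hθ0 hθ1 (by positivity) (fun i => ht0 (i + 1)) htail d n

theorem sum_prod_strictMono_le_sum_powersetCard {ι κ R : Type*} [LinearOrder ι] [CommSemiring R]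
    [PartialOrder R] [IsOrderedRing R] {n : ℕ} {m : κ → Fin n → ι} (hinj : Function.Injective m)
    (hmono : ∀ k, StrictMono (m k)) {T : Finset κ} {u : Finset ι} (hu : ∀ k ∈ T, ∀ i, m k i ∈ u)
    {t : ι → R} (ht0 : ∀ a ∈ u, 0 ≤ t a) :
    ∑ k ∈ T, ∏ i, t (m k i) ≤ ∑ A ∈ u.powersetCard n, ∏ a ∈ A, t a := by
  let image (k : κ) : Finset ι := Finset.univ.image (m k)
  have himage_inj : Function.Injective image := fun k l hkl => hinj <|
    ((hmono k).range_inj (hmono l)).1 <| by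
      simpa [image] using congrArg (fun A : Finset ι => (A : Set ι)) hkl
  have hprod (k : κ) : ∏ i, t (m k i) = ∏ a ∈ image k, t a :=
    (Finset.prod_image (hmono k).injective.injOn).symm
  have hsub : T.image image ⊆ u.powersetCard n := by
    refine Finset.image_subset_iff.2 fun k hk => Finset.mem_powersetCard.2 ⟨?_, ?_⟩
    · exact Finset.image_subset_iff.2 fun i _ => hu k hk i
    · rw [Finset.card_image_of_injective _ (hmono k).injective, Finset.card_fin]
  calc ∑ k ∈ T, ∏ i, t (m k i) = ∑ A ∈ T.image image, ∏ a ∈ A, t a := by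
        simp only [hprod, Finset.sum_image himage_inj.injOn]
    _ ≤ ∑ A ∈ u.powersetCard n, ∏ a ∈ A, t a :=
        Finset.sum_le_sum_of_subset_of_nonneg hsub fun A hA _ =>
          Finset.prod_nonneg fun a ha => ht0 a ((Finset.mem_powersetCard.1 hA).1 ha)

theorem sum_prod_strictMono_pos_le_of_eventually {R : Type*} [CommSemiring R] [PartialOrder R]
    [IsOrderedRing R] {n : ℕ} {t : ℕ → R} (ht0 : ∀ a, 0 ≤ t a) {S : R}
    (hS : ∀ᶠ N in Filter.atTop, ∑ A ∈ (Finset.Icc 1 N).powersetCard n, ∏ a ∈ A, t a ≤ S)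
    (T : Finset {m : Fin n → ℕ // StrictMono m ∧ ∀ i, 1 ≤ m i}) :
    ∑ m ∈ T, ∏ i, t (m.1 i) ≤ S := by
  obtain ⟨N, hSN, hN⟩ :=
    (hS.and (Filter.eventually_ge_atTop (T.sup fun m => Finset.univ.sup m.1))).exists
  have hle (m) (hm : m ∈ T) (i : Fin n) : m.1 i ≤ N :=
    calc m.1 i ≤ Finset.univ.sup m.1 := Finset.le_sup (Finset.mem_univ i)
      _ ≤ T.sup fun m => Finset.univ.sup m.1 :=
        Finset.le_sup (f := fun m => Finset.univ.sup m.1) hm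
      _ ≤ N := hN
  exact (sum_prod_strictMono_le_sum_powersetCard Subtype.val_injective (fun m => m.2.1)
    (fun m hm i => Finset.mem_Icc.2 ⟨m.2.2 i, hle m hm i⟩) fun a _ => ht0 a).trans hSN

/-- Combinatorial content of Theorem 5.3 (Coefficient bounds), with vanishing computational
errors: if `t_m ≤ C θ^m` for `m > L`, and `B_k` denotes the sum of products of the `t`'s over
`k`-element subsets of `{1, …, L}` (with `B_0 = 1`), then for every `n ≥ 1` the sum of products
over strictly increasing `n`-tuples of positive integers is at most
`c ∑_{k=0}^{min(n,L)} B_k (θ^L C)^{n-k}`, and for `n > L` it is at most `ξ (θ^L C)^n` with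
`ξ = c ∑_{k=0}^L B_k (θ^L C)^{-k}`, where `c = ∏_{j=1}^∞ (1-θ^j)⁻¹`. -/
theorem coefficient_bounds (θ C : ℝ) (hθ0 : 0 < θ) (hθ1 : θ < 1) (hC : 0 < C)
    (L : ℕ) (hL : 1 ≤ L) (t : ℕ → ℝ) (ht0 : ∀ m, 0 ≤ t m)
    (ht : ∀ m, L < m → t m ≤ C * θ ^ m) :
    letI B : ℕ → ℝ := fun k => ∑ A ∈ (Finset.Icc 1 L).powersetCard k, ∏ i ∈ A, t i
    letI c : ℝ := ∏' j : ℕ, (1 - θ ^ (j + 1))⁻¹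
    (∀ n : ℕ, 1 ≤ n →
      Summable (fun m : {m : Fin n → ℕ // StrictMono m ∧ ∀ i, 1 ≤ m i} => ∏ i, t (m.1 i)) ∧
      ∑' m : {m : Fin n → ℕ // StrictMono m ∧ ∀ i, 1 ≤ m i}, (∏ i, t (m.1 i))
        ≤ c * ∑ k ∈ Finset.range (min n L + 1), B k * (θ ^ L * C) ^ (n - k)) ∧
    (∀ n : ℕ, L < n →
      ∑' m : {m : Fin n → ℕ // StrictMono m ∧ ∀ i, 1 ≤ m i}, (∏ i, t (m.1 i))
        ≤ (c * ∑ k ∈ Finset.range (L + 1), B k * ((θ ^ L * C) ^ k)⁻¹) * (θ ^ L * C) ^ n) := by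
  beta_reduce
  have hfin (n : ℕ) := sum_prod_strictMono_pos_le_of_eventually (n := n) ht0 <|
    Filter.eventually_atTop.2
      ⟨L, fun N hLN => sum_powersetCard_Icc_one_le hθ0.le hθ1 hC.le ht0 ht hLN n⟩
  have hnonneg (n : ℕ) (m : {m : Fin n → ℕ // StrictMono m ∧ ∀ i, 1 ≤ m i}) :
      0 ≤ ∏ i, t (m.1 i) := Finset.prod_nonneg fun i _ => ht0 _
  refine ⟨fun n _ => ⟨summable_of_sum_le (hnonneg n) (hfin n),
    Real.tsum_le_of_sum_le (hnonneg n) (hfin n)⟩, fun n hn => ?_⟩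
  refine (Real.tsum_le_of_sum_le (hnonneg n) (hfin n)).trans_eq ?_
  have hD : θ ^ L * C ≠ 0 := by positivity
  rw [min_eq_right hn.le, mul_assoc, Finset.sum_mul]
  congr! 2 with k hk
  have hkn : k ≤ n := (Finset.mem_range_succ_iff.1 hk).trans hn.le
  rw [pow_sub₀ _ hD hkn, mul_comm (_ ^ n), mul_assoc]
end

section
/- Let b : ℝ → ℂ be defined by b(t) = ∑_{n=0}^∞ 2^{-(n+1)} exp(-2πi · 2^{n+1} t) (a uniformly convergent series). Then for every complex number c = x + iy (with x, y ∈ ℝ), ∫_0^1 ( Re( b(t) · c ) )² dt = (x² + y²)/6. -/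
/-- The restriction to the unit circle (parametrized by `z = e^{2πit}`) of
`b(z) = z̄ a₁(z)`, given by the uniformly convergent series
`b(t) = ∑_{n=0}^∞ 2^{-(n+1)} e^{-2πi 2^{n+1} t}`. -/
noncomputable def circleB (t : ℝ) : ℂ :=
  ∑' n : ℕ, ((2 : ℂ) ^ (n + 1))⁻¹ *
    Complex.exp (-2 * (Real.pi : ℂ) * Complex.I * 2 ^ (n + 1) * (t : ℂ))

/-!
All frequencies `-2 ^ (n + 1)` of `b` are negative. Hence `(c b)²` has no constant term, its
integral vanishes, and `(Re w)² = (|w|² + Re (w²)) / 2` leaves `∫ (Re (c b))² = ½ ∫ |c b|²`. As the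
frequencies are distinct, Parseval's identity evaluates this to
`½ |c|² ∑ 4 ^ (-(n + 1)) = |c|² / 6`.
-/

open MeasureTheory AddCircle
open scoped ComplexConjugate

section ContinuousMap

variable {X E ι : Type*} [TopologicalSpace X] [CompactSpace X] [MeasurableSpace X] [BorelSpace X]
  [NormedAddCommGroup E] [NormedSpace ℝ E] [CompleteSpace E] [SecondCountableTopologyEither X E]

lemma hasSum_integral_of_hasSum_continuousMap (μ : Measure X) [IsFiniteMeasure μ]
    {u : ι → C(X, E)} {f : C(X, E)} (hu : HasSum u f) :
    HasSum (fun i ↦ ∫ x, u i x ∂μ) (∫ x, f x ∂μ) := by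
  have integral_toLp (v : C(X, E)) :
      L1.integralCLM (ContinuousMap.toLp 1 μ ℝ v) = ∫ x, v x ∂μ := by
    rw [← L1.integral_def, L1.integral_eq_integral]
    exact integral_congr_ae (ContinuousMap.coeFn_toLp μ v)
  simpa only [integral_toLp] using
    (hu.mapL (ContinuousMap.toLp (E := E) 1 μ ℝ)).mapL L1.integralCLM

end ContinuousMap

lemma sq_re_eq_half_add (z : ℂ) : z.re ^ 2 = (‖z‖ ^ 2 + (z ^ 2).re) / 2 := by
  rw [Complex.sq_norm, Complex.normSq_apply, sq z, Complex.mul_re]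
  ring

lemma integral_sq_re_of_integral_sq_eq_zero {X : Type*} [MeasurableSpace X] {μ : Measure X}
    {f : X → ℂ} (hf : MemLp f 2 μ) (hf_sq : ∫ x, f x ^ 2 ∂μ = 0) :
    ∫ x, (f x).re ^ 2 ∂μ = (∫ x, ‖f x‖ ^ 2 ∂μ) / 2 := by
  have integrable_sq : Integrable (fun x ↦ f x ^ 2) μ := by
    simpa only [sq] using! hf.integrable_mul hf
  have integral_re_sq : ∫ x, (f x ^ 2).re ∂μ = 0 := by
    rw [← RCLike.re_eq_complex_re, integral_re integrable_sq, hf_sq, map_zero]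
  simp only [sq_re_eq_half_add]
  rw [integral_div,
    integral_add (g := fun x ↦ (f x ^ 2).re) hf.norm.integrable_sq integrable_sq.re,
    integral_re_sq, add_zero]

section Fourier

variable {T : ℝ} [Fact (0 < T)]

lemma fourierCoeff_conj (f : AddCircle T → ℂ) (n : ℤ) :
    fourierCoeff (fun t ↦ conj (f t)) n = conj (fourierCoeff f (-n)) := by
  simp only [fourierCoeff, ← integral_conj, smul_eq_mul, map_mul, ← fourier_neg, neg_neg]

variable {ι : Type*} {a : ι → ℂ} {k : ι → ℤ} {f : C(AddCircle T, ℂ)}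

lemma hasSum_integral_mul (hf : HasSum (fun i ↦ a i • fourier (k i)) f)
    (g : C(AddCircle T, ℂ)) :
    HasSum (fun i ↦ a i * fourierCoeff g (-k i)) (∫ t, f t * g t ∂haarAddCircle) := by
  have h := hasSum_integral_of_hasSum_continuousMap haarAddCircle (hf.mul_right g)
  simpa only [ContinuousMap.mul_apply, ContinuousMap.smul_apply, smul_eq_mul, mul_assoc,
    integral_const_mul, fourierCoeff, neg_neg] using h

lemma hasSum_fourierCoeff (hf : HasSum (fun i ↦ a i • fourier (k i)) f) (n : ℤ) :
    HasSum (fun i ↦ if k i = n then a i else 0) (fourierCoeff f n) := by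
  have h := hasSum_integral_mul hf (fourier (-n))
  simp only [fourierCoeff_fourier, Pi.single_apply, neg_inj, mul_ite, mul_one, mul_zero] at h
  simpa only [fourierCoeff, smul_eq_mul, mul_comm] using h

lemma fourierCoeff_eq_zero_of_notMem_range (hf : HasSum (fun i ↦ a i • fourier (k i)) f)
    {n : ℤ} (hn : n ∉ Set.range k) : fourierCoeff f n = 0 := by
  have h_terms (i : ι) : (if k i = n then a i else 0) = 0 := if_neg fun hi ↦ hn ⟨i, hi⟩
  simpa only [h_terms, tsum_zero] using (hasSum_fourierCoeff hf n).tsum_eq.symm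

lemma fourierCoeff_apply_of_injective (hf : HasSum (fun i ↦ a i • fourier (k i)) f)
    (hk : Function.Injective k) (i : ι) : fourierCoeff f (k i) = a i := by
  classical
  simpa only [hk.eq_iff, tsum_ite_eq] using (hasSum_fourierCoeff hf (k i)).tsum_eq.symm

lemma integral_sq_eq_zero_of_neg_notMem_range (hf : HasSum (fun i ↦ a i • fourier (k i)) f)
    (hk_neg : ∀ i, -k i ∉ Set.range k) : ∫ t, f t ^ 2 ∂haarAddCircle = 0 := by
  have h := hasSum_integral_mul hf f
  simp only [fourierCoeff_eq_zero_of_notMem_range hf (hk_neg _), mul_zero, ← sq] at h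
  exact h.unique hasSum_zero

lemma hasSum_integral_sq_norm (hf : HasSum (fun i ↦ a i • fourier (k i)) f)
    (hk : Function.Injective k) :
    HasSum (fun i ↦ ‖a i‖ ^ 2) (∫ t, ‖f t‖ ^ 2 ∂haarAddCircle) := by
  have h := hasSum_integral_mul hf (star f)
  have h_coeff (i : ι) : fourierCoeff ⇑(star f) (-k i) = conj (a i) := by
    rw [← fourierCoeff_apply_of_injective hf hk i, ← neg_neg (k i), ← fourierCoeff_conj, neg_neg]
    rfl
  simp only [h_coeff, ContinuousMap.star_apply, RCLike.star_def, Complex.mul_conj'] at h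
  exact_mod_cast h

theorem hasSum_integral_sq_re (hf : HasSum (fun i ↦ a i • fourier (k i)) f)
    (hk : Function.Injective k) (hk_neg : ∀ i, -k i ∉ Set.range k) :
    HasSum (fun i ↦ ‖a i‖ ^ 2 / 2) (∫ t, (f t).re ^ 2 ∂haarAddCircle) := by
  rw [integral_sq_re_of_integral_sq_eq_zero (f.memLp haarAddCircle ℂ)
    (integral_sq_eq_zero_of_neg_notMem_range hf hk_neg)]
  exact (hasSum_integral_sq_norm hf hk).div_const 2

end Fourier

/-- The function `circleB`, of period one, as a continuous function on `ℝ / ℤ`, given by the same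
series, now taken in the uniform norm. -/
noncomputable def circleBLift : C(UnitAddCircle, ℂ) :=
  ∑' n : ℕ, ((2 : ℂ) ^ (n + 1))⁻¹ • fourier (-2 ^ (n + 1))

lemma hasSum_circleBLift :
    HasSum (fun n : ℕ ↦ ((2 : ℂ) ^ (n + 1))⁻¹ • fourier (-2 ^ (n + 1))) circleBLift := by
  refine Summable.hasSum (.of_norm ?_)
  simp only [norm_smul, fourier_norm, mul_one, norm_inv, norm_pow, Complex.norm_ofNat, ← inv_pow]
  exact (summable_nat_add_iff 1).2 (summable_geometric_of_lt_one (by norm_num) (by norm_num))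

lemma circleBLift_coe (t : ℝ) : circleBLift (t : UnitAddCircle) = circleB t := by
  rw [circleBLift, ← ContinuousMap.tsum_apply hasSum_circleBLift.summable, circleB]
  refine tsum_congr fun n ↦ ?_
  rw [ContinuousMap.smul_apply, fourier_coe_apply, smul_eq_mul]
  push_cast
  ring_nf

lemma hasSum_sq_norm_inv_two_pow_succ :
    HasSum (fun n : ℕ ↦ ‖((2 : ℂ) ^ (n + 1))⁻¹‖ ^ 2) (1 / 3) := by
  have h_geom : HasSum (fun n : ℕ ↦ (1 / 4 : ℝ) * (1 / 4) ^ n) (1 / 4 * (1 - 1 / 4)⁻¹) :=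
    (hasSum_geometric_of_lt_one (by norm_num) (by norm_num)).mul_left _
  convert! h_geom using 1
  · ext n
    rw [← pow_succ', norm_inv, norm_pow, Complex.norm_ofNat, ← inv_pow, pow_right_comm]
    norm_num
  · norm_num

lemma injective_neg_two_pow_succ : Function.Injective fun n : ℕ ↦ -(2 : ℤ) ^ (n + 1) :=
  neg_injective.comp
    ((pow_right_injective₀ two_pos (by norm_num)).comp (add_left_injective 1))

lemma neg_neg_two_pow_succ_notMem_range (n : ℕ) :
    -(-2 ^ (n + 1)) ∉ Set.range fun m : ℕ ↦ -(2 : ℤ) ^ (m + 1) := by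
  rintro ⟨m, hm⟩
  have hm_pos : (0 : ℤ) < 2 ^ (m + 1) := by positivity
  have hn_pos : (0 : ℤ) < 2 ^ (n + 1) := by positivity
  linarith

lemma integral_sq_re_mul_circleB (c : ℂ) :
    ∫ t in (0 : ℝ)..1, (c * circleB t).re ^ 2 = ‖c‖ ^ 2 / 6 := by
  have hasSum_smul : HasSum (fun n : ℕ ↦ (c * ((2 : ℂ) ^ (n + 1))⁻¹) • fourier (-2 ^ (n + 1)))
      (c • circleBLift) := by
    simpa only [smul_smul] using hasSum_circleBLift.const_smul c
  have integral_eq : ∫ t in (0 : ℝ)..1, (c * circleB t).re ^ 2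
      = ∫ t, ((c • circleBLift) t).re ^ 2 ∂haarAddCircle := by
    rw [integral_haarAddCircle, inv_one, one_smul, ← UnitAddCircle.intervalIntegral_preimage 0,
      zero_add]
    simp only [ContinuousMap.smul_apply, smul_eq_mul, circleBLift_coe]
  have h := hasSum_integral_sq_re hasSum_smul injective_neg_two_pow_succ
    neg_neg_two_pow_succ_notMem_range
  simp only [norm_mul, mul_pow, mul_div_right_comm] at h
  rw [integral_eq, h.unique (hasSum_sq_norm_inv_two_pow_succ.mul_left _)]
  ring

/-- For every `c = x + iy`, `∫_0^1 (Re(b(t) c))² dt = (x² + y²)/6`. -/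
theorem integral_sq_re_circleB_mul (x y : ℝ) :
    ∫ t in (0 : ℝ)..1, ((circleB t * ((x : ℂ) + (y : ℂ) * Complex.I)).re) ^ 2
      = (x ^ 2 + y ^ 2) / 6 := by
  simp only [mul_comm (circleB _), integral_sq_re_mul_circleB, Complex.sq_norm,
    Complex.normSq_add_mul_I]
end

section
/- Let D = { z ∈ ℂ : |z - 1| < 3/2 }. Then: (i) the real interval [0,1] is contained in D; (ii) every z ∈ D satisfies 1 + z ≠ 0 and 2 + z ≠ 0; and (iii) for every z ∈ D, both 1/(1+z) ∈ D and 1/(2+z) ∈ D. -/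
/-!
The inversion `w ↦ w⁻¹` carries the half-plane `1 / 2 < re w` into the unit disc about `1`, because
`‖w⁻¹ - 1‖ < 1` says that `w` is closer to `1` than to `0`. A disc of radius `3 / 2` about `1` lies
in `-1 / 2 < re z`, so translating it by a digit `a ≥ 1` lands in that half-plane; the images under
`z ↦ 1 / (a + z)` are therefore in the unit disc about `1`, which is smaller than the original one.
-/

open Metric

theorem norm_one_sub_lt_norm_iff {w : ℂ} : ‖1 - w‖ < ‖w‖ ↔ 1 / 2 < w.re := by
  have expand : ‖1 - w‖ ^ 2 = 1 + ‖w‖ ^ 2 - 2 * w.re := by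
    simp [Complex.sq_norm, Complex.normSq_sub]
  rw [← sq_lt_sq₀ (norm_nonneg _) (norm_nonneg _), expand]
  constructor <;> intro h <;> linarith

theorem inv_mem_ball_norm_iff {c w : ℂ} : w⁻¹ ∈ ball c ‖c‖ ↔ 1 / 2 < (c * w).re := by
  rcases eq_or_ne w 0 with rfl | hw
  · simp
  have clear_inv : (w⁻¹ - c) * w = 1 - c * w := by
    rw [sub_mul, inv_mul_cancel₀ hw]
  rw [mem_ball_iff_norm, ← norm_one_sub_lt_norm_iff, ← clear_inv, norm_mul, norm_mul,
    mul_lt_mul_iff_left₀ (norm_pos_iff.mpr hw)]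

theorem re_sub_lt_re_of_mem_ball {c z : ℂ} {r : ℝ} (hz : z ∈ ball c r) : c.re - r < z.re := by
  have hre : |z.re - c.re| < r :=
    (Complex.abs_re_le_norm (z - c)).trans_lt (mem_ball_iff_norm.mp hz)
  linarith [(abs_lt.mp hre).1]

theorem add_ne_zero_of_mem_ball {a c z : ℂ} {r : ℝ} (hr : r ≤ (a + c).re) (hz : z ∈ ball c r) :
    a + z ≠ 0 := by
  intro h
  have hre : a.re + z.re = 0 := congrArg Complex.re h
  rw [Complex.add_re] at hr
  linarith [re_sub_lt_re_of_mem_ball hz]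

theorem one_div_add_mem_ball_one {a c z : ℂ} {r : ℝ} (hr : r + 1 / 2 ≤ (a + c).re)
    (hz : z ∈ ball c r) : 1 / (a + z) ∈ ball (1 : ℂ) 1 := by
  have half_lt : 1 / 2 < (1 * (a + z)).re := by
    rw [Complex.add_re] at hr
    rw [one_mul, Complex.add_re]
    linarith [re_sub_lt_re_of_mem_ball hz]
  simpa only [one_div, norm_one] using inv_mem_ball_norm_iff.mpr half_lt

/-- For the disc `D = {z : |z - 1| < 3/2}`: (i) `[0,1] ⊆ D`; (ii) `1 + z ≠ 0` and
`2 + z ≠ 0` for `z ∈ D`; and (iii) `D` is mapped into itself by `z ↦ 1/(1+z)` and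
`z ↦ 1/(2+z)`. -/
theorem disc_invariance_E2 :
    letI D : Set ℂ := {z : ℂ | ‖z - 1‖ < 3 / 2}
    (∀ x : ℝ, x ∈ Set.Icc (0 : ℝ) 1 → (x : ℂ) ∈ D) ∧
    (∀ z ∈ D, 1 + z ≠ 0 ∧ 2 + z ≠ 0) ∧
    (∀ z ∈ D, 1 / (1 + z) ∈ D ∧ 1 / (2 + z) ∈ D) := by
  have hD : {z : ℂ | ‖z - 1‖ < 3 / 2} = ball 1 (3 / 2) := by
    ext z
    exact mem_ball_iff_norm.symm
  have unit_subset : ball (1 : ℂ) 1 ⊆ ball 1 (3 / 2) := ball_subset_ball (by norm_num)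
  rw [hD]
  refine ⟨fun x hx => ?_, fun z hz => ⟨?_, ?_⟩, fun z hz => ⟨?_, ?_⟩⟩
  · rw [← Complex.ofReal_one, mem_ball, Complex.isometry_ofReal.dist_eq, ← mem_ball,
      Real.ball_eq_Ioo]
    constructor <;> linarith [hx.1, hx.2]
  · exact add_ne_zero_of_mem_ball (by norm_num) hz
  · exact add_ne_zero_of_mem_ball (by norm_num) hz
  · exact unit_subset (one_div_add_mem_ball_one (by norm_num) hz)
  · exact unit_subset (one_div_add_mem_ball_one (by norm_num) hz)
end
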